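/- Let b > 1 and β ∈ (0, 1/2), and let s ∈ (2, 3 − 2β). Then for almost every pair (Θ, Λ) ∈ [0,1]^ℕ × [0,1]^ℕ (with respect to the infinite product of uniform measures on [0,1]), the s-energy I_s(μ_{Θ,Λ}) = ∫₀¹∫₀¹ ((x − y)² + |f_{Θ,Λ}(x) − f_{Θ,Λ}(y)|²)^{−s/2} dx dy is finite. -/

import Mathlib

open MeasureTheory

/-- First coordinate of the random vector-valued Weierstrass function
`t ↦ ∑ b^{-βn} cos(2π(bⁿ t + θₙ))`. -/
noncomputable def W1 (b β : ℝ) (Θ : ℕ → ℝ) (t : ℝ) : ℝ :=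
  ∑' n : ℕ, b ^ (-β * (n : ℝ)) * Real.cos (2 * Real.pi * (b ^ n * t + Θ n))

/-- Second coordinate of the random vector-valued Weierstrass function
`t ↦ ∑ b^{-βn} sin(2π(bⁿ t + λₙ))`. -/
noncomputable def W2 (b β : ℝ) (Λ : ℕ → ℝ) (t : ℝ) : ℝ :=
  ∑' n : ℕ, b ^ (-β * (n : ℝ)) * Real.sin (2 * Real.pi * (b ^ n * t + Λ n))

/-- Euclidean distance `|f_{Θ,Λ}(x) - f_{Θ,Λ}(y)|` in ℝ². -/
noncomputable def Wdist (b β : ℝ) (Θ Λ : ℕ → ℝ) (x y : ℝ) : ℝ :=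
  Real.sqrt ((W1 b β Θ x - W1 b β Θ y) ^ 2 + (W2 b β Λ x - W2 b β Λ y) ^ 2)

/-- The graph `G(f_{Θ,Λ}) = {(t, f_{Θ,Λ}(t)) : t ∈ [0,1]}` inside ℝ³ = ℝ × ℝ². -/
def Wgraph (b β : ℝ) (Θ Λ : ℕ → ℝ) : Set (ℝ × ℝ × ℝ) :=
  {p | ∃ t ∈ Set.Icc (0 : ℝ) 1, p = (t, W1 b β Θ t, W2 b β Λ t)}

/-- `μ` is the infinite product over `ℕ` of the uniform probability measures on `[0,1]`:
the measure of every measurable cylinder is the corresponding finite product of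
uniform measures. -/
def IsUniformProductMeasure (μ : Measure (ℕ → ℝ)) : Prop :=
  ∀ (t : Finset ℕ) (s : ℕ → Set ℝ), (∀ i, MeasurableSet (s i)) →
    μ {f : ℕ → ℝ | ∀ i ∈ t, f i ∈ s i} =
      ∏ i ∈ t, (volume.restrict (Set.Icc (0 : ℝ) 1)) (s i)

/-!
A coordinate of `f(x) - f(y)` is again a series of harmonics with independent uniform phases. If
`bⁿ|x - y|` is of order one for three consecutive frequencies `bⁿ`, then three of its amplitudes
are at least of order `|x - y| ^ β`, and three such phases already force the law of the coordinate
to have a density bounded by a multiple of `|x - y| ^ (-β)`. Indeed, integrating out a single phase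
with the weight `|sin|` is a change of variables that costs only one over the amplitude; by AM-GM
the sum of `|sin v₁| / √|sin v₂ sin v₃|` over the cyclic permutations of the three phases is at
least `3`, and `|sin| ^ (-1/2)` is integrable, so the weight can be inserted for free.

The two coordinates are independent, so `f(x) - f(y)` has a density bounded by a multiple of
`|x - y| ^ (-2β)`. Rescaling the plane by `|x - y|` leaves an integral that converges because
`s > 2`, and shows that the expected energy kernel is `O(|x - y| ^ (2 - s - 2β))`. This is
integrable on the unit square because `s < 3 - 2β`, and Tonelli's theorem concludes.
-/

section

open Set Function Real ProbabilityTheory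
open scoped ENNReal

/-- The law of a single random phase: the uniform distribution on `[0, 1]`. -/
noncomputable abbrev uniformPhase : Measure ℝ :=
  volume.restrict (Icc 0 1)

instance : IsProbabilityMeasure uniformPhase :=
  ⟨by simp [uniformPhase]⟩

/-- The law of a family of independent uniform phases. -/
noncomputable abbrev randomPhases (ι : Type*) : Measure (ι → ℝ) :=
  Measure.infinitePi fun _ ↦ uniformPhase

theorem IsUniformProductMeasure.eq_randomPhases {μ : Measure (ℕ → ℝ)}
    (hμ : IsUniformProductMeasure μ) : μ = randomPhases ℕ :=
  Measure.eq_infinitePi _ fun s t ht ↦ hμ s t ht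

theorem setLIntegral_Ioc_eq_of_periodic {F : ℝ → ℝ≥0∞} {T : ℝ} (hF : Periodic F T) (hT : 0 < T)
    (s t : ℝ) : ∫⁻ v in Ioc s (s + T), F v = ∫⁻ v in Ioc t (t + T), F v := by
  have : VAddInvariantMeasure (AddSubgroup.zmultiples T) ℝ volume :=
    ⟨fun c _ _ ↦ measure_preimage_add volume (c : ℝ) _⟩
  exact (isAddFundamentalDomain_Ioc hT s).setLIntegral_eq (isAddFundamentalDomain_Ioc hT t) F
    hF.map_vadd_zmultiples

theorem two_pi_mul_lintegral_uniformPhase {F : ℝ → ℝ≥0∞} (hF : Periodic F (2 * π)) (φ : ℝ) :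
    ENNReal.ofReal (2 * π) * ∫⁻ u, F (2 * π * u + φ) ∂uniformPhase = ∫⁻ v in Ioc (-π) π, F v := by
  have hderiv (u : ℝ) : HasDerivAt (fun u ↦ 2 * π * u + φ) (2 * π) u := by
    simpa using ((hasDerivAt_id u).const_mul (2 * π)).add_const φ
  have hinj : Injective fun u : ℝ ↦ 2 * π * u + φ := fun u v huv ↦
    mul_left_cancel₀ two_pi_pos.ne' (add_right_cancel huv)
  have himage : (fun u ↦ 2 * π * u + φ) '' Ioc 0 1 = Ioc φ (φ + 2 * π) := by
    rw [image_affine_Ioc two_pi_pos, mul_zero, zero_add, mul_one, add_comm]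
  calc ENNReal.ofReal (2 * π) * ∫⁻ u, F (2 * π * u + φ) ∂uniformPhase
      = ∫⁻ u in Ioc 0 1, ENNReal.ofReal |2 * π| * F (2 * π * u + φ) := by
        rw [lintegral_const_mul' _ _ ENNReal.ofReal_ne_top, abs_of_pos two_pi_pos, uniformPhase,
          restrict_Ioc_eq_restrict_Icc]
    _ = ∫⁻ v in Ioc φ (φ + 2 * π), F v := by
        rw [← himage, lintegral_image_eq_lintegral_abs_deriv_mul measurableSet_Ioc
          (fun u _ ↦ (hderiv u).hasDerivWithinAt) hinj.injOn]
    _ = ∫⁻ v in Ioc (-π) π, F v := by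
        rw [setLIntegral_Ioc_eq_of_periodic hF two_pi_pos φ (-π)]
        ring_nf

theorem setLIntegral_enorm_sin_mul_comp_cos_le {s : Set ℝ} (hs : MeasurableSet s)
    (hcos : InjOn cos s) (g : ℝ → ℝ≥0∞) (a z : ℝ) :
    ∫⁻ v in s, ‖a * sin v‖ₑ * g (z + a * cos v) ≤ ∫⁻ x, g x := by
  rcases eq_or_ne a 0 with rfl | ha
  · simp
  have hderiv (v : ℝ) : HasDerivAt (fun v ↦ z + a * cos v) (-(a * sin v)) v := by
    simpa using ((hasDerivAt_cos v).const_mul a).const_add z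
  have hinj : InjOn (fun v ↦ z + a * cos v) s := fun u hu v hv huv ↦
    hcos hu hv (mul_left_cancel₀ ha (add_left_cancel huv))
  calc ∫⁻ v in s, ‖a * sin v‖ₑ * g (z + a * cos v)
      = ∫⁻ x in (fun v ↦ z + a * cos v) '' s, g x := by
        rw [lintegral_image_eq_lintegral_abs_deriv_mul hs
          (fun v _ ↦ (hderiv v).hasDerivWithinAt) hinj]
        simp_rw [abs_neg, ← enorm_eq_ofReal_abs]
    _ ≤ ∫⁻ x, g x := setLIntegral_le_lintegral _ _

-- The factor `|sin|` is the Jacobian of `cos` and cancels the singularities of the arcsine density.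
theorem lintegral_enorm_sin_mul_comp_cos_le (g : ℝ → ℝ≥0∞) (a φ z : ℝ) :
    ∫⁻ u, ‖a * sin (2 * π * u + φ)‖ₑ * g (z + a * cos (2 * π * u + φ)) ∂uniformPhase
      ≤ ∫⁻ x, g x := by
  set F : ℝ → ℝ≥0∞ := fun v ↦ ‖a * sin v‖ₑ * g (z + a * cos v)
  have hF : Periodic F (2 * π) := fun v ↦ by simp only [F, sin_add_two_pi, cos_add_two_pi]
  have hcos_neg : InjOn cos (Ioc (-π) 0) := fun u hu v hv huv ↦
    neg_injective <| injOn_cos ⟨by linarith [hu.2], by linarith [hu.1]⟩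
      ⟨by linarith [hv.2], by linarith [hv.1]⟩ (by simpa only [cos_neg] using huv)
  have hcos_pos : InjOn cos (Ioc 0 π) := injOn_cos.mono Ioc_subset_Icc_self
  have htwo : (2 : ℝ≥0∞) ≤ ENNReal.ofReal (2 * π) := by
    rw [← ENNReal.ofReal_ofNat 2]
    exact ENNReal.ofReal_le_ofReal (by linarith [pi_gt_three])
  suffices 2 * ∫⁻ u, F (2 * π * u + φ) ∂uniformPhase ≤ 2 * ∫⁻ x, g x from
    (ENNReal.mul_le_mul_iff_right two_ne_zero ENNReal.ofNat_ne_top).1 this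
  calc 2 * ∫⁻ u, F (2 * π * u + φ) ∂uniformPhase
      ≤ ENNReal.ofReal (2 * π) * ∫⁻ u, F (2 * π * u + φ) ∂uniformPhase := by gcongr
    _ = ∫⁻ v in Ioc (-π) 0 ∪ Ioc 0 π, F v := by
        rw [two_pi_mul_lintegral_uniformPhase hF,
          Ioc_union_Ioc_eq_Ioc (by linarith [pi_pos]) pi_nonneg]
    _ ≤ (∫⁻ v in Ioc (-π) 0, F v) + ∫⁻ v in Ioc 0 π, F v := lintegral_union_le _ _ _
    _ ≤ (∫⁻ x, g x) + ∫⁻ x, g x :=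
        add_le_add (setLIntegral_enorm_sin_mul_comp_cos_le measurableSet_Ioc hcos_neg g a z)
          (setLIntegral_enorm_sin_mul_comp_cos_le measurableSet_Ioc hcos_pos g a z)
    _ = 2 * ∫⁻ x, g x := (two_mul _).symm

/-- The integrable weight `|sin v|^(-1/2)`. Two such weights pay for one factor `|sin|`
in `three_le_sum_enorm_sin_mul_sinWeight`. -/
noncomputable def sinWeight (v : ℝ) : ℝ≥0∞ :=
  ENNReal.ofReal (√|sin v|)⁻¹

/-- The integral of `sinWeight` over a period. -/
noncomputable def sinWeightMass : ℝ≥0∞ :=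
  ∫⁻ v in Ioc (-π) π, sinWeight v

@[fun_prop]
theorem measurable_sinWeight : Measurable sinWeight := by
  unfold sinWeight
  fun_prop

theorem intervalIntegrable_inv_sqrt_abs_sin (a b : ℝ) :
    IntervalIntegrable (fun v ↦ (√|sin v|)⁻¹) volume a b := by
  have hperiodic : Periodic (fun v ↦ (√|sin v|)⁻¹) π := fun v ↦ by
    simp only [sin_add_pi, abs_neg]
  have hdecay (v : ℝ) (hv : v ∈ Metric.ball 0 (π / 2)) :
      ‖(√|sin v|)⁻¹‖ ≤ (√(2 / π))⁻¹ * ‖v‖ ^ (-(1 / 2) : ℝ) := by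
    rcases eq_or_ne v 0 with rfl | hv0
    · simp
    have hjordan : 2 / π * |v| ≤ |sin v| := mul_abs_le_abs_sin (by simpa using hv.out.le)
    have : 0 < 2 / π * |v| := by positivity
    rw [norm_of_nonneg (by positivity), norm_eq_abs, rpow_neg (abs_nonneg v), ← sqrt_eq_rpow,
      ← mul_inv, ← sqrt_mul (by positivity)]
    gcongr
  have hball : IntegrableOn (fun v ↦ (√|sin v|)⁻¹) (Metric.ball 0 (π / 2)) :=
    integrableOn_ball_of_norm_le_rpow (by simp) (by norm_num)
      (ae_restrict_of_forall_mem measurableSet_ball hdecay) (by fun_prop)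
  refine hperiodic.intervalIntegrable (t := -(π / 2)) pi_ne_zero ?_ a b
  rw [intervalIntegrable_iff_integrableOn_Ioo_of_le (by linarith [pi_pos])]
  simpa [Real.ball_eq_Ioo, neg_add_eq_sub, sub_half] using hball

theorem sinWeightMass_ne_top : sinWeightMass ≠ ∞ :=
  ((intervalIntegrable_iff_integrableOn_Ioc_of_le (by linarith [pi_pos])).1
    (intervalIntegrable_inv_sqrt_abs_sin (-π) π)).lintegral_lt_top.ne

theorem lintegral_sinWeight_le (φ : ℝ) :
    ∫⁻ u, sinWeight (2 * π * u + φ) ∂uniformPhase ≤ sinWeightMass := by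
  have hperiodic : Periodic sinWeight (2 * π) := fun v ↦ by
    simp only [sinWeight, sin_add_two_pi]
  rw [sinWeightMass, ← two_pi_mul_lintegral_uniformPhase hperiodic φ]
  exact le_mul_of_one_le_left' (ENNReal.one_le_ofReal.2 (by linarith [pi_gt_three]))

theorem three_le_sum_sq_mul_inv_mul_inv {p q r : ℝ} (hp : 0 < p) (hq : 0 < q) (hr : 0 < r) :
    3 ≤ p ^ 2 * (q⁻¹ * r⁻¹) + q ^ 2 * (r⁻¹ * p⁻¹) + r ^ 2 * (p⁻¹ * q⁻¹) := by
  have hamgm : 3 * (p * q * r) ≤ p ^ 3 + q ^ 3 + r ^ 3 := by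
    nlinarith [mul_nonneg (add_pos (add_pos hp hq) hr).le
      (add_nonneg (add_nonneg (sq_nonneg (p - q)) (sq_nonneg (q - r))) (sq_nonneg (r - p)))]
  calc 3 ≤ (p ^ 3 + q ^ 3 + r ^ 3) / (p * q * r) := (le_div_iff₀ (by positivity)).2 hamgm
    _ = p ^ 2 * (q⁻¹ * r⁻¹) + q ^ 2 * (r⁻¹ * p⁻¹) + r ^ 2 * (p⁻¹ * q⁻¹) := by field_simp

theorem three_le_sum_enorm_sin_mul_sinWeight {x y z : ℝ} (hx : sin x ≠ 0) (hy : sin y ≠ 0)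
    (hz : sin z ≠ 0) :
    3 ≤ ‖sin x‖ₑ * (sinWeight y * sinWeight z) + ‖sin y‖ₑ * (sinWeight z * sinWeight x) +
      ‖sin z‖ₑ * (sinWeight x * sinWeight y) := by
  have hsqrt {v : ℝ} (hv : sin v ≠ 0) : 0 < √|sin v| := sqrt_pos.2 (abs_pos.2 hv)
  have henorm (v : ℝ) : ‖sin v‖ₑ = ENNReal.ofReal (√|sin v| ^ 2) := by
    rw [sq_sqrt (abs_nonneg _), enorm_eq_ofReal_abs]
  simp only [henorm, sinWeight]
  have := three_le_sum_sq_mul_inv_mul_inv (hsqrt hx) (hsqrt hy) (hsqrt hz)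
  rw [← ENNReal.ofReal_ofNat 3]
  repeat rw [← ENNReal.ofReal_mul (by positivity)]
  repeat rw [← ENNReal.ofReal_add (by positivity) (by positivity)]
  exact ENNReal.ofReal_le_ofReal this

theorem three_mul_le_sum_enorm_mul_sin_mul_sinWeight {x y z : ℝ} (hx : sin x ≠ 0) (hy : sin y ≠ 0)
    (hz : sin z ≠ 0) {a₁ a₂ a₃ : ℝ} {c : ℝ≥0∞} (h₁ : c ≤ ‖a₁‖ₑ) (h₂ : c ≤ ‖a₂‖ₑ) (h₃ : c ≤ ‖a₃‖ₑ)
    (t : ℝ≥0∞) :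
    3 * (c * t) ≤ ‖a₁ * sin x‖ₑ * t * (sinWeight y * sinWeight z) +
      ‖a₂ * sin y‖ₑ * t * (sinWeight z * sinWeight x) +
      ‖a₃ * sin z‖ₑ * t * (sinWeight x * sinWeight y) := by
  calc 3 * (c * t)
      ≤ (‖sin x‖ₑ * (sinWeight y * sinWeight z) + ‖sin y‖ₑ * (sinWeight z * sinWeight x) +
          ‖sin z‖ₑ * (sinWeight x * sinWeight y)) * (c * t) := by
        gcongr
        exact three_le_sum_enorm_sin_mul_sinWeight hx hy hz
    _ = c * ‖sin x‖ₑ * t * (sinWeight y * sinWeight z) +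
        c * ‖sin y‖ₑ * t * (sinWeight z * sinWeight x) +
        c * ‖sin z‖ₑ * t * (sinWeight x * sinWeight y) := by ring
    _ ≤ _ := by
        simp only [enorm_mul]
        gcongr

theorem measurePreserving_update_infinitePi {ι : Type*} [DecidableEq ι] {X : ι → Type*}
    [∀ i, MeasurableSpace (X i)] (ν : ∀ i, Measure (X i)) [∀ i, IsProbabilityMeasure (ν i)]
    (i : ι) :
    MeasurePreserving (fun p : (∀ j, X j) × X i ↦ update p.1 i p.2)
      ((Measure.infinitePi ν).prod (ν i)) (Measure.infinitePi ν) := by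
  have hmeas : Measurable fun p : (∀ j, X j) × X i ↦ update p.1 i p.2 := by fun_prop
  refine ⟨hmeas, Measure.eq_infinitePi ν fun s t ht ↦ ?_⟩
  have hpreimage : (fun p : (∀ j, X j) × X i ↦ update p.1 i p.2) ⁻¹' (s : Set ι).pi t =
      ((s.erase i : Finset ι) : Set ι).pi t ×ˢ {u | i ∈ s → u ∈ t i} := by
    ext ⟨ω, u⟩
    simp only [mem_preimage, Set.mem_pi, mem_prod, SetLike.mem_coe, Finset.mem_erase, mem_ofPred_eq]
    refine ⟨fun h ↦ ⟨fun j hj ↦ by simpa [hj.1] using h j hj.2, fun hi ↦ by simpa using h i hi⟩,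
      fun h j hj ↦ ?_⟩
    rcases eq_or_ne j i with rfl | hji
    · simpa using h.2 hj
    · simpa [hji] using h.1 j ⟨hji, hj⟩
  rw [Measure.map_apply hmeas (.pi s.countable_toSet fun j _ ↦ ht j), hpreimage,
    Measure.prod_prod, Measure.infinitePi_pi _ fun j _ ↦ ht j]
  by_cases hi : i ∈ s
  · simpa [hi] using Finset.prod_erase_mul s (fun j ↦ ν j (t j)) hi
  · simp [hi]

theorem lintegral_infinitePi_update {ι : Type*} [DecidableEq ι] {X : ι → Type*}
    [∀ i, MeasurableSpace (X i)] (ν : ∀ i, Measure (X i)) [∀ i, IsProbabilityMeasure (ν i)]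
    (i : ι) {F : (∀ j, X j) → ℝ≥0∞} (hF : Measurable F) :
    ∫⁻ ω, F ω ∂Measure.infinitePi ν =
      ∫⁻ ω, ∫⁻ u, F (update ω i u) ∂ν i ∂Measure.infinitePi ν := by
  have hupdate := measurePreserving_update_infinitePi ν i
  rw [← hupdate.lintegral_comp hF]
  exact lintegral_prod _ (hF.comp hupdate.measurable).aemeasurable

/-- The series `∑ n, A n cos (2π θ n + φ n)` of harmonics with amplitudes `A`, deterministic phases
`φ`, and additional (later random) phases `θ` measured in full turns. -/
noncomputable def phaseSeries {ι : Type*} (A φ θ : ι → ℝ) : ℝ :=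
  ∑' n, A n * cos (2 * π * θ n + φ n)

section PhaseSeries

variable {ι : Type*} {A : ι → ℝ}

theorem norm_mul_cos_le (a v : ℝ) : ‖a * cos v‖ ≤ ‖a‖ := by
  rw [norm_mul]
  exact mul_le_of_le_one_right (norm_nonneg a) (abs_cos_le_one v)

theorem summable_phaseSeries (hA : Summable A) (φ θ : ι → ℝ) :
    Summable fun n ↦ A n * cos (2 * π * θ n + φ n) :=
  .of_norm_bounded hA.norm fun _ ↦ norm_mul_cos_le _ _

theorem continuous_phaseSeries (hA : Summable A) :
    Continuous fun p : (ι → ℝ) × (ι → ℝ) ↦ phaseSeries A p.1 p.2 :=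
  continuous_tsum (fun _ ↦ by fun_prop) hA.norm fun _ _ ↦ norm_mul_cos_le _ _

theorem measurable_phaseSeries [Countable ι] (hA : Summable A) (φ : ι → ℝ) :
    Measurable (phaseSeries A φ) :=
  ((continuous_phaseSeries hA).comp (Continuous.prodMk_right φ)).measurable

theorem exists_phaseSeries_update [DecidableEq ι] (hA : Summable A) (φ θ : ι → ℝ) (i : ι) :
    ∃ z, ∀ u, phaseSeries A φ (update θ i u) = z + A i * cos (2 * π * u + φ i) := by
  refine ⟨phaseSeries A φ θ - A i * cos (2 * π * θ i + φ i), fun u ↦ ?_⟩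
  have hterms : (fun n ↦ A n * cos (2 * π * update θ i u n + φ n)) =
      update (fun n ↦ A n * cos (2 * π * θ n + φ n)) i (A i * cos (2 * π * u + φ i)) := by
    ext n
    rcases eq_or_ne n i with rfl | hn
    · simp
    · simp [hn]
  have := ((summable_phaseSeries hA φ θ).hasSum.update i (A i * cos (2 * π * u + φ i))).tsum_eq
  rw [phaseSeries, hterms, this, phaseSeries]
  ring

theorem phaseSeries_sub_phaseSeries (hA : Summable A) (φ ψ θ : ι → ℝ) :
    phaseSeries A φ θ - phaseSeries A ψ θ =
      phaseSeries (fun n ↦ 2 * A n * sin ((φ n - ψ n) / 2))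
        (fun n ↦ (φ n + ψ n) / 2 + π / 2) θ := by
  simp only [phaseSeries]
  rw [← (summable_phaseSeries hA φ θ).tsum_sub (summable_phaseSeries hA ψ θ)]
  refine tsum_congr fun n ↦ ?_
  have hmean : (2 * π * θ n + φ n + (2 * π * θ n + ψ n)) / 2 = 2 * π * θ n + (φ n + ψ n) / 2 := by
    ring
  rw [← mul_sub, cos_sub_cos, hmean, add_sub_add_left_eq_sub, ← add_assoc, cos_add_pi_div_two]
  ring

theorem lintegral_sinWeight_mul_sinWeight_le (φ : ι → ℝ) {j k : ι} (hjk : j ≠ k) :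
    ∫⁻ θ, sinWeight (2 * π * θ j + φ j) * sinWeight (2 * π * θ k + φ k) ∂randomPhases ι
      ≤ sinWeightMass ^ 2 := by
  have hmeas (n : ι) : Measurable fun u ↦ sinWeight (2 * π * u + φ n) := by fun_prop
  have hpair : Measurable fun θ : ι → ℝ ↦ (θ j, θ k) := by fun_prop
  calc ∫⁻ θ, sinWeight (2 * π * θ j + φ j) * sinWeight (2 * π * θ k + φ k) ∂randomPhases ι
      = ∫⁻ p, sinWeight (2 * π * p.1 + φ j) * sinWeight (2 * π * p.2 + φ k)
          ∂uniformPhase.prod uniformPhase := by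
        rw [← Measure.infinitePi_map_eval_prod (P := fun _ ↦ uniformPhase) hjk,
          lintegral_map (by fun_prop) hpair]
    _ = (∫⁻ u, sinWeight (2 * π * u + φ j) ∂uniformPhase) *
          ∫⁻ u, sinWeight (2 * π * u + φ k) ∂uniformPhase :=
        lintegral_prod_mul (hmeas j).aemeasurable (hmeas k).aemeasurable
    _ ≤ sinWeightMass ^ 2 := by
        rw [sq]
        exact mul_le_mul' (lintegral_sinWeight_le _) (lintegral_sinWeight_le _)

theorem lintegral_enorm_sin_mul_comp_phaseSeries_mul_le [Countable ι] (hA : Summable A)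
    (φ : ι → ℝ) {g : ℝ → ℝ≥0∞} (hg : Measurable g) {i j k : ι} (hij : i ≠ j) (hjk : j ≠ k)
    (hki : k ≠ i) :
    ∫⁻ θ, ‖A i * sin (2 * π * θ i + φ i)‖ₑ * g (phaseSeries A φ θ) *
        (sinWeight (2 * π * θ j + φ j) * sinWeight (2 * π * θ k + φ k)) ∂randomPhases ι
      ≤ (∫⁻ x, g x) * sinWeightMass ^ 2 := by
  classical
  have hmeas := measurable_phaseSeries hA φ
  set w : (ι → ℝ) → ℝ≥0∞ := fun θ ↦
    sinWeight (2 * π * θ j + φ j) * sinWeight (2 * π * θ k + φ k)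
  have hw_update (θ : ι → ℝ) (u : ℝ) : w (update θ i u) = w θ := by simp [w, hij.symm, hki]
  have hinner (θ : ι → ℝ) : ∫⁻ u, ‖A i * sin (2 * π * update θ i u i + φ i)‖ₑ *
      g (phaseSeries A φ (update θ i u)) * w (update θ i u) ∂uniformPhase
        ≤ (∫⁻ x, g x) * w θ := by
    obtain ⟨z, hz⟩ := exists_phaseSeries_update hA φ θ i
    simp only [hz, hw_update, update_self]
    rw [lintegral_mul_const _ (by fun_prop)]
    exact mul_le_mul_left (lintegral_enorm_sin_mul_comp_cos_le g (A i) (φ i) z) (w θ)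
  calc ∫⁻ θ, ‖A i * sin (2 * π * θ i + φ i)‖ₑ * g (phaseSeries A φ θ) * w θ ∂randomPhases ι
      ≤ ∫⁻ θ, (∫⁻ x, g x) * w θ ∂randomPhases ι := by
        rw [lintegral_infinitePi_update _ i (by fun_prop)]
        exact lintegral_mono hinner
    _ ≤ (∫⁻ x, g x) * sinWeightMass ^ 2 := by
        rw [lintegral_const_mul _ (by fun_prop)]
        gcongr
        exact lintegral_sinWeight_mul_sinWeight_le φ hjk

theorem countable_setOf_sin_eq_zero : {v | sin v = 0}.Countable :=
  (countable_range fun n : ℤ ↦ n * π).mono fun _ hv ↦ sin_eq_zero_iff.1 hv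

theorem ae_sin_randomPhases_ne_zero (φ : ι → ℝ) (i : ι) :
    ∀ᵐ θ ∂randomPhases ι, sin (2 * π * θ i + φ i) ≠ 0 := by
  have hinj : Injective fun u : ℝ ↦ 2 * π * u + φ i := fun u v huv ↦
    mul_left_cancel₀ two_pi_pos.ne' (add_right_cancel huv)
  have huniform : ∀ᵐ u ∂uniformPhase, sin (2 * π * u + φ i) ≠ 0 :=
    (countable_setOf_sin_eq_zero.preimage hinj).ae_notMem _
  exact (measurePreserving_eval_infinitePi (fun _ ↦ uniformPhase) i).quasiMeasurePreserving.ae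
    huniform

-- One phase gives an arcsine density and two phases a logarithmic singularity; the density becomes
-- bounded at three phases.
theorem lintegral_comp_phaseSeries_le [Countable ι] (hA : Summable A) (φ : ι → ℝ) {i j k : ι}
    (hij : i ≠ j) (hjk : j ≠ k) (hki : k ≠ i) {c : ℝ≥0∞} (hi : c ≤ ‖A i‖ₑ) (hj : c ≤ ‖A j‖ₑ)
    (hk : c ≤ ‖A k‖ₑ) {g : ℝ → ℝ≥0∞} (hg : Measurable g) :
    c * ∫⁻ θ, g (phaseSeries A φ θ) ∂randomPhases ι ≤ sinWeightMass ^ 2 * ∫⁻ x, g x := by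
  have hmeas := measurable_phaseSeries hA φ
  set v : ι → (ι → ℝ) → ℝ := fun n θ ↦ 2 * π * θ n + φ n
  set T : ι → ι → ι → (ι → ℝ) → ℝ≥0∞ := fun l m n θ ↦
    ‖A l * sin (v l θ)‖ₑ * g (phaseSeries A φ θ) *
      (sinWeight (v m θ) * sinWeight (v n θ))
  have hT_meas (l m n : ι) : Measurable (T l m n) := by fun_prop
  have hT_le {l m n : ι} (hlm : l ≠ m) (hmn : m ≠ n) (hnl : n ≠ l) :
      ∫⁻ θ, T l m n θ ∂randomPhases ι ≤ (∫⁻ x, g x) * sinWeightMass ^ 2 :=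
    lintegral_enorm_sin_mul_comp_phaseSeries_mul_le hA φ hg hlm hmn hnl
  have hpointwise : ∀ᵐ θ ∂randomPhases ι,
      3 * (c * g (phaseSeries A φ θ)) ≤ T i j k θ + T j k i θ + T k i j θ := by
    filter_upwards [ae_sin_randomPhases_ne_zero φ i, ae_sin_randomPhases_ne_zero φ j,
      ae_sin_randomPhases_ne_zero φ k] with θ hθi hθj hθk
    exact three_mul_le_sum_enorm_mul_sin_mul_sinWeight hθi hθj hθk hi hj hk _
  suffices 3 * (c * ∫⁻ θ, g (phaseSeries A φ θ) ∂randomPhases ι)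
      ≤ 3 * (sinWeightMass ^ 2 * ∫⁻ x, g x) from
    (ENNReal.mul_le_mul_iff_right three_ne_zero ENNReal.ofNat_ne_top).1 this
  calc 3 * (c * ∫⁻ θ, g (phaseSeries A φ θ) ∂randomPhases ι)
      = ∫⁻ θ, 3 * (c * g (phaseSeries A φ θ)) ∂randomPhases ι := by
        rw [lintegral_const_mul _ (by fun_prop), lintegral_const_mul _ (by fun_prop)]
    _ ≤ ∫⁻ θ, T i j k θ + T j k i θ + T k i j θ ∂randomPhases ι := lintegral_mono_ae hpointwise
    _ = (∫⁻ θ, T i j k θ ∂randomPhases ι) + (∫⁻ θ, T j k i θ ∂randomPhases ι) +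
          ∫⁻ θ, T k i j θ ∂randomPhases ι := by
        rw [lintegral_add_right _ (hT_meas k i j), lintegral_add_right _ (hT_meas j k i)]
    _ ≤ (∫⁻ x, g x) * sinWeightMass ^ 2 + (∫⁻ x, g x) * sinWeightMass ^ 2 +
          (∫⁻ x, g x) * sinWeightMass ^ 2 :=
        add_le_add_three (hT_le hij hjk hki) (hT_le hjk hki hij) (hT_le hki hij hjk)
    _ = 3 * (sinWeightMass ^ 2 * ∫⁻ x, g x) := by ring

theorem map_phaseSeries_le_smul_volume [Countable ι] (hA : Summable A) (φ : ι → ℝ) {i j k : ι}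
    (hij : i ≠ j) (hjk : j ≠ k) (hki : k ≠ i) {c : ℝ≥0∞} (hc : c ≠ 0) (hi : c ≤ ‖A i‖ₑ)
    (hj : c ≤ ‖A j‖ₑ) (hk : c ≤ ‖A k‖ₑ) :
    (randomPhases ι).map (phaseSeries A φ) ≤ (sinWeightMass ^ 2 / c) • volume := by
  have hmeas := measurable_phaseSeries hA φ
  have hc_top : c ≠ ∞ := ne_top_of_le_ne_top enorm_ne_top hi
  refine Measure.le_iff.2 fun s hs ↦ ?_
  have hs_meas : Measurable (s.indicator (1 : ℝ → ℝ≥0∞)) := measurable_one.indicator hs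
  have := lintegral_comp_phaseSeries_le hA φ hij hjk hki hi hj hk hs_meas
  rw [← lintegral_map hs_meas hmeas, lintegral_indicator_one hs, lintegral_indicator_one hs] at this
  rw [Measure.smul_apply, smul_eq_mul, ← ENNReal.mul_div_right_comm,
    ENNReal.le_div_iff_mul_le (.inl hc) (.inl hc_top), mul_comm]
  exact this

end PhaseSeries

section Energy

variable {E : Type*} [NormedAddCommGroup E] [NormedSpace ℝ E] [FiniteDimensional ℝ E]
  [MeasurableSpace E] [BorelSpace E] (μ : Measure E) [μ.IsAddHaarMeasure]

theorem lintegral_rpow_sq_add_norm_sq (s : ℝ) {A : ℝ} (hA : 0 < A) :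
    ∫⁻ x : E, ENNReal.ofReal ((A ^ 2 + ‖x‖ ^ 2) ^ (-(s / 2))) ∂μ =
      ENNReal.ofReal (A ^ (Module.finrank ℝ E - s)) *
        ∫⁻ x : E, ENNReal.ofReal ((1 + ‖x‖ ^ 2) ^ (-(s / 2))) ∂μ := by
  set d := Module.finrank ℝ E
  have hμ : μ = ENNReal.ofReal (A ^ d) • μ.map (A • ·) := by
    rw [Measure.map_addHaar_smul μ hA.ne', smul_smul, ← ENNReal.ofReal_mul (by positivity),
      abs_of_pos (by positivity), mul_inv_cancel₀ (by positivity), ENNReal.ofReal_one, one_smul]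
  have hscale (x : E) : A ^ d * (A ^ 2 + ‖A • x‖ ^ 2) ^ (-(s / 2)) =
      A ^ (d - s) * (1 + ‖x‖ ^ 2) ^ (-(s / 2)) := by
    have hfactor : A ^ 2 + ‖A • x‖ ^ 2 = A ^ 2 * (1 + ‖x‖ ^ 2) := by
      rw [norm_smul, norm_of_nonneg hA.le]
      ring
    rw [hfactor, mul_rpow (by positivity) (by positivity), ← mul_assoc, ← rpow_natCast A 2,
      ← rpow_mul hA.le, ← rpow_natCast A d, ← rpow_add hA]
    ring_nf
  conv_lhs => rw [hμ]
  rw [lintegral_smul_measure, lintegral_map (by fun_prop) (by fun_prop), smul_eq_mul,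
    ← lintegral_const_mul _ (by fun_prop), ← lintegral_const_mul _ (by fun_prop)]
  congr with x
  rw [← ENNReal.ofReal_mul (by positivity), ← ENNReal.ofReal_mul (by positivity), hscale]

theorem lintegral_rpow_one_add_norm_sq_ne_top {s : ℝ} (hs : Module.finrank ℝ E < s) :
    ∫⁻ x : E, ENNReal.ofReal ((1 + ‖x‖ ^ 2) ^ (-(s / 2))) ∂μ ≠ ∞ := by
  simpa only [neg_div] using (integrable_rpow_neg_one_add_norm_sq (μ := μ) hs).lintegral_lt_top.ne

theorem lintegral_rpow_sq_add_norm_sq_le_of_map_le {Ω : Type*} [MeasurableSpace Ω] {P : Measure Ω}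
    {Z : Ω → E} (hZ : Measurable Z) {M : ℝ≥0∞} (hP : P.map Z ≤ M • μ) (s : ℝ) {A : ℝ}
    (hA : 0 < A) :
    ∫⁻ ω, ENNReal.ofReal ((A ^ 2 + ‖Z ω‖ ^ 2) ^ (-(s / 2))) ∂P ≤
      M * (ENNReal.ofReal (A ^ (Module.finrank ℝ E - s)) *
        ∫⁻ x : E, ENNReal.ofReal ((1 + ‖x‖ ^ 2) ^ (-(s / 2))) ∂μ) := by
  calc ∫⁻ ω, ENNReal.ofReal ((A ^ 2 + ‖Z ω‖ ^ 2) ^ (-(s / 2))) ∂P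
      = ∫⁻ x, ENNReal.ofReal ((A ^ 2 + ‖x‖ ^ 2) ^ (-(s / 2))) ∂P.map Z := by
        rw [lintegral_map (by fun_prop) hZ]
    _ ≤ ∫⁻ x, ENNReal.ofReal ((A ^ 2 + ‖x‖ ^ 2) ^ (-(s / 2))) ∂(M • μ) := lintegral_mono' hP le_rfl
    _ = _ := by rw [lintegral_smul_measure, smul_eq_mul, lintegral_rpow_sq_add_norm_sq μ s hA]

end Energy

theorem measurable_complexMk_prod {Ω Ω' : Type*} [MeasurableSpace Ω] [MeasurableSpace Ω']
    {X : Ω → ℝ} {Y : Ω' → ℝ} (hX : Measurable X) (hY : Measurable Y) :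
    Measurable fun p : Ω × Ω' ↦ (⟨X p.1, Y p.2⟩ : ℂ) :=
  Complex.measurableEquivRealProd.symm.measurable.comp (hX.prodMap hY)

theorem map_complexMk_prod_le_smul_volume {Ω Ω' : Type*} [MeasurableSpace Ω] [MeasurableSpace Ω']
    {P : Measure Ω} {Q : Measure Ω'} [SFinite P] [SFinite Q] {X : Ω → ℝ} {Y : Ω' → ℝ}
    (hX : Measurable X) (hY : Measurable Y) {M N : ℝ≥0∞} (hP : P.map X ≤ M • volume)
    (hQ : Q.map Y ≤ N • volume) :
    (P.prod Q).map (fun p ↦ (⟨X p.1, Y p.2⟩ : ℂ)) ≤ (M * N) • volume := by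
  have hmk := Complex.volume_preserving_equiv_real_prod.symm
  calc (P.prod Q).map (fun p ↦ (⟨X p.1, Y p.2⟩ : ℂ))
      = ((P.map X).prod (Q.map Y)).map Complex.measurableEquivRealProd.symm := by
        rw [Measure.map_prod_map P Q hX hY, Measure.map_map hmk.measurable (hX.prodMap hY)]
        rfl
    _ ≤ ((M • volume).prod (N • volume)).map Complex.measurableEquivRealProd.symm :=
        Measure.map_mono (Measure.prod_mono hP hQ) hmk.measurable
    _ = (M * N) • volume := by
        rw [Measure.prod_smul_left, Measure.prod_smul_right, smul_smul, ← Measure.volume_eq_prod,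
          Measure.map_smul, hmk.map_eq]

theorem ae_lintegral_lintegral_lt_top {Ω α α' : Type*} [MeasurableSpace Ω] [MeasurableSpace α]
    [MeasurableSpace α'] {P : Measure Ω} {ν : Measure α} {ν' : Measure α'} [SFinite P] [SFinite ν]
    [SFinite ν'] {F : α → α' → Ω → ℝ≥0∞} (hF : Measurable fun q : α × α' × Ω ↦ F q.1 q.2.1 q.2.2)
    (hfin : ∫⁻ x, ∫⁻ y, ∫⁻ ω, F x y ω ∂P ∂ν' ∂ν ≠ ∞) :
    ∀ᵐ ω ∂P, ∫⁻ x, ∫⁻ y, F x y ω ∂ν' ∂ν < ∞ := by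
  refine ae_lt_top (by fun_prop) ?_
  rw [lintegral_lintegral_swap (by fun_prop)]
  convert hfin using 3 with x
  exact lintegral_lintegral_swap (by fun_prop)

theorem lintegral_Icc_lintegral_Icc_abs_sub_rpow_ne_top {γ : ℝ} (hγ : γ < 1) :
    ∫⁻ x in Icc (0 : ℝ) 1, ∫⁻ y in Icc (0 : ℝ) 1, ENNReal.ofReal (|x - y| ^ (-γ)) ≠ ∞ := by
  set J := ∫⁻ t in Icc (-1 : ℝ) 1, ENNReal.ofReal (|t| ^ (-γ))
  have hlocal : LocallyIntegrable fun t : ℝ ↦ |t| ^ (-γ) :=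
    locallyIntegrable_of_norm_le_rpow (C := 1) (α := γ) (by simp) (by simpa using hγ)
      (.of_forall fun t ↦ by simp [abs_rpow_of_nonneg])
      (by fun_prop : Measurable fun t : ℝ ↦ |t| ^ (-γ)).aestronglyMeasurable
  have hJ_fin : J ≠ ∞ := (hlocal.integrableOn_isCompact isCompact_Icc).lintegral_lt_top.ne
  have hinner (x : ℝ) (hx : x ∈ Icc (0 : ℝ) 1) :
      ∫⁻ y in Icc (0 : ℝ) 1, ENNReal.ofReal (|x - y| ^ (-γ)) ≤ J := by
    have hsub : Icc (0 : ℝ) 1 ⊆ (x - ·) ⁻¹' Icc (-1) 1 := fun y hy ↦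
      ⟨by linarith [hx.1, hy.2], by linarith [hx.2, hy.1]⟩
    calc ∫⁻ y in Icc (0 : ℝ) 1, ENNReal.ofReal (|x - y| ^ (-γ))
        ≤ ∫⁻ y in (x - ·) ⁻¹' Icc (-1) 1, ENNReal.ofReal (|x - y| ^ (-γ)) :=
          lintegral_mono_set hsub
      _ = J := (volume.measurePreserving_sub_left x).setLIntegral_comp_preimage measurableSet_Icc
          (by fun_prop : Measurable fun t : ℝ ↦ ENNReal.ofReal (|t| ^ (-γ)))
  refine ne_top_of_le_ne_top hJ_fin ?_
  calc ∫⁻ x in Icc (0 : ℝ) 1, ∫⁻ y in Icc (0 : ℝ) 1, ENNReal.ofReal (|x - y| ^ (-γ))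
      ≤ ∫⁻ _ in Icc (0 : ℝ) 1, J := setLIntegral_mono' measurableSet_Icc hinner
    _ = J := by simp

section Weierstrass

variable {b β : ℝ}

theorem summable_rpow_neg_mul_natCast (hb : 1 < b) (hβ : 0 < β) :
    Summable fun n : ℕ ↦ b ^ (-β * (n : ℝ)) := by
  have hratio : b ^ (-β) < 1 := rpow_lt_one_of_one_lt_of_neg hb (neg_neg_of_pos hβ)
  simpa only [rpow_mul_natCast (zero_le_one.trans hb.le)] using
    summable_geometric_of_lt_one (rpow_nonneg (zero_le_one.trans hb.le) _) hratio

theorem W1_eq_phaseSeries (Θ : ℕ → ℝ) (t : ℝ) :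
    W1 b β Θ t = phaseSeries (fun n : ℕ ↦ b ^ (-β * (n : ℝ))) (fun n ↦ 2 * π * (b ^ n * t)) Θ :=
  tsum_congr fun n ↦ by rw [mul_add, add_comm]

theorem W2_eq_phaseSeries (Λ : ℕ → ℝ) (t : ℝ) :
    W2 b β Λ t =
      phaseSeries (fun n : ℕ ↦ b ^ (-β * (n : ℝ))) (fun n ↦ 2 * π * (b ^ n * t) - π / 2) Λ :=
  tsum_congr fun n ↦ by rw [mul_add, add_comm, ← cos_sub_pi_div_two, add_sub_assoc]

theorem continuous_W1 (hb : 1 < b) (hβ : 0 < β) :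
    Continuous fun p : (ℕ → ℝ) × ℝ ↦ W1 b β p.1 p.2 := by
  have hphase : Continuous fun p : (ℕ → ℝ) × ℝ ↦ fun n : ℕ ↦ 2 * π * (b ^ n * p.2) := by fun_prop
  simp only [W1_eq_phaseSeries]
  have hseries := continuous_phaseSeries (summable_rpow_neg_mul_natCast hb hβ)
  exact hseries.comp₂ hphase continuous_fst

theorem continuous_W2 (hb : 1 < b) (hβ : 0 < β) :
    Continuous fun p : (ℕ → ℝ) × ℝ ↦ W2 b β p.1 p.2 := by
  have hphase : Continuous fun p : (ℕ → ℝ) × ℝ ↦ fun n : ℕ ↦ 2 * π * (b ^ n * p.2) - π / 2 := by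
    fun_prop
  simp only [W2_eq_phaseSeries]
  have hseries := continuous_phaseSeries (summable_rpow_neg_mul_natCast hb hβ)
  exact hseries.comp₂ hphase continuous_fst

/-- The amplitudes of the increment of either coordinate of the Weierstrass function between two
points at signed distance `D`, as a `phaseSeries`. -/
noncomputable def incrementAmplitude (b β D : ℝ) (n : ℕ) : ℝ :=
  2 * b ^ (-β * (n : ℝ)) * sin (π * (b ^ n * D))

theorem summable_incrementAmplitude (hb : 1 < b) (hβ : 0 < β) (D : ℝ) :
    Summable (incrementAmplitude b β D) :=
  .of_norm_bounded ((summable_rpow_neg_mul_natCast hb hβ).mul_left 2).norm fun n ↦ by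
    rw [incrementAmplitude, norm_mul]
    exact mul_le_of_le_one_right (norm_nonneg _) (abs_sin_le_one _)

theorem W1_sub_W1_eq_phaseSeries (hb : 1 < b) (hβ : 0 < β) (Θ : ℕ → ℝ) (x y : ℝ) :
    W1 b β Θ x - W1 b β Θ y =
      phaseSeries (incrementAmplitude b β (x - y)) (fun n ↦ π * (b ^ n * (x + y)) + π / 2) Θ := by
  rw [W1_eq_phaseSeries, W1_eq_phaseSeries,
    phaseSeries_sub_phaseSeries (summable_rpow_neg_mul_natCast hb hβ)]
  congr with n
  · rw [incrementAmplitude]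
    ring_nf
  · ring

theorem W2_sub_W2_eq_phaseSeries (hb : 1 < b) (hβ : 0 < β) (Λ : ℕ → ℝ) (x y : ℝ) :
    W2 b β Λ x - W2 b β Λ y =
      phaseSeries (incrementAmplitude b β (x - y)) (fun n ↦ π * (b ^ n * (x + y))) Λ := by
  rw [W2_eq_phaseSeries, W2_eq_phaseSeries,
    phaseSeries_sub_phaseSeries (summable_rpow_neg_mul_natCast hb hβ)]
  congr with n
  · rw [incrementAmplitude]
    ring_nf
  · ring

theorem exists_forall_pow_mul_mem_Icc (hb : 1 < b) {ε : ℝ} (hε : 0 < ε) (hbε : b ^ 2 * ε ≤ 1 / 2) :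
    ∃ N : ℕ, ∀ n ∈ Icc N (N + 2), b ^ n * ε ∈ Icc (2 * b ^ 3)⁻¹ (1 / 2) := by
  have : 0 < b := zero_lt_one.trans hb
  have hpos : 0 < 2 * b ^ 2 * ε := by positivity
  obtain ⟨N, hN_le, hN_lt⟩ := exists_nat_pow_near (x := (2 * b ^ 2 * ε)⁻¹)
    ((one_le_inv₀ hpos).2 (by linarith)) hb
  refine ⟨N, fun n hn ↦ ⟨?_, ?_⟩⟩
  · rw [inv_lt_iff_one_lt_mul₀ hpos] at hN_lt
    have hN : (2 * b ^ 3)⁻¹ ≤ b ^ N * ε := by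
      rw [inv_le_iff_one_le_mul₀ (by positivity)]
      calc 1 ≤ b ^ (N + 1) * (2 * b ^ 2 * ε) := hN_lt.le
        _ = b ^ N * ε * (2 * b ^ 3) := by ring
    have hbn : b ^ N ≤ b ^ n := pow_le_pow_right₀ hb.le hn.1
    exact hN.trans (by gcongr)
  · rw [le_inv_comm₀ (by positivity) hpos] at hN_le
    calc b ^ n * ε ≤ b ^ (N + 2) * ε := by
          gcongr
          exacts [hb.le, hn.2]
      _ = b ^ N * (2 * b ^ 2 * ε) / 2 := by ring
      _ ≤ b ^ N * (b ^ N)⁻¹ / 2 := by gcongr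
      _ = 1 / 2 := by rw [mul_inv_cancel₀ (by positivity)]

theorem mul_rpow_abs_le_abs_incrementAmplitude (hb : 0 < b) (hβ : 0 ≤ β) {D : ℝ} (hD : D ≠ 0)
    {n : ℕ} (hn : b ^ n * |D| ≤ 1 / 2) :
    4 * (b ^ n * |D|) * |D| ^ β ≤ |incrementAmplitude b β D n| := by
  have hpow : |D| ^ β ≤ b ^ (-β * (n : ℝ)) := by
    have hD_le : |D| ≤ (b ^ n)⁻¹ := by
      rw [le_inv_comm₀ (abs_pos.2 hD) (by positivity), ← one_div, le_div_iff₀ (abs_pos.2 hD)]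
      linarith
    calc |D| ^ β ≤ ((b ^ n)⁻¹) ^ β := by gcongr
      _ = b ^ (-β * (n : ℝ)) := by
        rw [inv_rpow (by positivity), ← rpow_neg (by positivity), ← rpow_natCast_mul hb.le,
          mul_comm]
  have hsin : 2 * (b ^ n * |D|) ≤ |sin (π * (b ^ n * D))| := by
    have harg : |π * (b ^ n * D)| = π * (b ^ n * |D|) := by
      rw [abs_mul, abs_mul, abs_of_pos pi_pos, abs_of_pos (by positivity : 0 < b ^ n)]
    have hjordan := mul_abs_le_abs_sin (x := π * (b ^ n * D)) (by
      rw [harg]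
      nlinarith [pi_pos])
    rwa [harg, ← mul_assoc, div_mul_cancel₀ _ pi_ne_zero] at hjordan
  rw [incrementAmplitude, abs_mul, abs_of_pos (by positivity : 0 < 2 * b ^ (-β * (n : ℝ)))]
  calc 4 * (b ^ n * |D|) * |D| ^ β = 2 * |D| ^ β * (2 * (b ^ n * |D|)) := by ring
    _ ≤ 2 * b ^ (-β * (n : ℝ)) * |sin (π * (b ^ n * D))| := by gcongr

theorem exists_forall_le_enorm_incrementAmplitude (hb : 1 < b) (hβ : 0 ≤ β) {D : ℝ} (hD : D ≠ 0)
    (hbD : b ^ 2 * |D| ≤ 1 / 2) :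
    ∃ N : ℕ, ∀ n ∈ Icc N (N + 2),
      ENNReal.ofReal (|D| ^ β / b ^ 3) ≤ ‖incrementAmplitude b β D n‖ₑ := by
  have hb0 : 0 < b := zero_lt_one.trans hb
  obtain ⟨N, hN⟩ := exists_forall_pow_mul_mem_Icc hb (abs_pos.2 hD) hbD
  refine ⟨N, fun n hn ↦ ?_⟩
  obtain ⟨hlower, hupper⟩ := hN n hn
  rw [enorm_eq_ofReal_abs]
  refine ENNReal.ofReal_le_ofReal ?_
  calc |D| ^ β / b ^ 3 ≤ 2 * (|D| ^ β / b ^ 3) := by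
        have : 0 ≤ |D| ^ β / b ^ 3 := by positivity
        linarith
    _ = 4 * (2 * b ^ 3)⁻¹ * |D| ^ β := by field_simp; norm_num
    _ ≤ 4 * (b ^ n * |D|) * |D| ^ β := by gcongr
    _ ≤ |incrementAmplitude b β D n| :=
        mul_rpow_abs_le_abs_incrementAmplitude hb0 hβ hD hupper

theorem map_phaseSeries_incrementAmplitude_le (hb : 1 < b) (hβ : 0 < β) {D : ℝ} (hD : D ≠ 0)
    (hbD : b ^ 2 * |D| ≤ 1 / 2) (φ : ℕ → ℝ) :
    (randomPhases ℕ).map (phaseSeries (incrementAmplitude b β D) φ) ≤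
      (sinWeightMass ^ 2 * ENNReal.ofReal (b ^ 3 * |D| ^ (-β))) • volume := by
  have : 0 < b := zero_lt_one.trans hb
  have hscale : 0 < |D| ^ β / b ^ 3 := by positivity
  obtain ⟨N, hN⟩ := exists_forall_le_enorm_incrementAmplitude hb hβ.le hD hbD
  have hinv : (ENNReal.ofReal (|D| ^ β / b ^ 3))⁻¹ = ENNReal.ofReal (b ^ 3 * |D| ^ (-β)) := by
    rw [← ENNReal.ofReal_inv_of_pos hscale, inv_div, rpow_neg (abs_nonneg D), div_eq_mul_inv]
  rw [← hinv, ← div_eq_mul_inv]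
  exact map_phaseSeries_le_smul_volume (summable_incrementAmplitude hb hβ D) φ
    (i := N) (j := N + 1) (k := N + 2) (by lia) (by lia) (by lia) (ENNReal.ofReal_pos.2 hscale).ne'
    (hN _ ⟨by lia, by lia⟩) (hN _ ⟨by lia, by lia⟩) (hN _ ⟨by lia, by lia⟩)

theorem Wdist_eq_norm (Θ Λ : ℕ → ℝ) (x y : ℝ) :
    Wdist b β Θ Λ x y = ‖(⟨W1 b β Θ x - W1 b β Θ y, W2 b β Λ x - W2 b β Λ y⟩ : ℂ)‖ := by
  rw [Wdist, Complex.norm_eq_sqrt_sq_add_sq]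

/-- The integrand of the `s`-energy of the graph of the Weierstrass function, as a function of the
two times `x`, `y` and of the pair `p = (Θ, Λ)` of phase sequences. -/
noncomputable def energyKernel (b β s x y : ℝ) (p : (ℕ → ℝ) × (ℕ → ℝ)) : ℝ≥0∞ :=
  ENNReal.ofReal (((x - y) ^ 2 + Wdist b β p.1 p.2 x y ^ 2) ^ (-(s / 2)))

theorem measurable_energyKernel (hb : 1 < b) (hβ : 0 < β) (s : ℝ) :
    Measurable fun q : ℝ × ℝ × (ℕ → ℝ) × (ℕ → ℝ) ↦ energyKernel b β s q.1 q.2.1 q.2.2 := by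
  have hW1 := continuous_W1 hb hβ
  have hW2 := continuous_W2 hb hβ
  have hWdist : Continuous fun q : ℝ × ℝ × (ℕ → ℝ) × (ℕ → ℝ) ↦
      Wdist b β q.2.2.1 q.2.2.2 q.1 q.2.1 := by
    unfold Wdist
    fun_prop
  unfold energyKernel
  fun_prop

theorem lintegral_energyKernel_le_of_abs_sub_le (hb : 1 < b) (hβ : 0 < β) (s : ℝ) {x y : ℝ}
    (hxy : x ≠ y) (hnear : b ^ 2 * |x - y| ≤ 1 / 2) :
    ∫⁻ p, energyKernel b β s x y p ∂(randomPhases ℕ).prod (randomPhases ℕ) ≤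
      sinWeightMass ^ 4 * ENNReal.ofReal (b ^ 6) *
          (∫⁻ z : ℂ, ENNReal.ofReal ((1 + ‖z‖ ^ 2) ^ (-(s / 2)))) *
        ENNReal.ofReal (|x - y| ^ (-(s - 2 + 2 * β))) := by
  have hD : x - y ≠ 0 := sub_ne_zero.2 hxy
  have hD_pos : 0 < |x - y| := abs_pos.2 hD
  set J := ∫⁻ z : ℂ, ENNReal.ofReal ((1 + ‖z‖ ^ 2) ^ (-(s / 2)))
  set M := sinWeightMass ^ 2 * ENNReal.ofReal (b ^ 3 * |x - y| ^ (-β))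
  set φ : ℕ → ℝ := fun n ↦ π * (b ^ n * (x + y))
  set ψ : ℕ → ℝ := fun n ↦ π * (b ^ n * (x + y)) + π / 2
  set X := phaseSeries (incrementAmplitude b β (x - y))
  have hX (φ : ℕ → ℝ) : Measurable (X φ) :=
    measurable_phaseSeries (summable_incrementAmplitude hb hβ (x - y)) φ
  have hkernel (p : (ℕ → ℝ) × (ℕ → ℝ)) : energyKernel b β s x y p =
      ENNReal.ofReal ((|x - y| ^ 2 + ‖(⟨X ψ p.1, X φ p.2⟩ : ℂ)‖ ^ 2) ^ (-(s / 2))) := by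
    rw [energyKernel, Wdist_eq_norm, W1_sub_W1_eq_phaseSeries hb hβ,
      W2_sub_W2_eq_phaseSeries hb hβ, sq_abs]
  have hdensity (φ : ℕ → ℝ) := map_phaseSeries_incrementAmplitude_le hb hβ hD hnear φ
  have hplanar := map_complexMk_prod_le_smul_volume (hX ψ) (hX φ) (hdensity ψ) (hdensity φ)
  have hpowers : (b ^ 3 * |x - y| ^ (-β)) ^ 2 * |x - y| ^ (2 - s) =
      b ^ 6 * |x - y| ^ (-(s - 2 + 2 * β)) := by
    rw [mul_pow, ← pow_mul, mul_assoc, ← rpow_mul_natCast hD_pos.le, ← rpow_add hD_pos]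
    ring_nf
  calc ∫⁻ p, energyKernel b β s x y p ∂(randomPhases ℕ).prod (randomPhases ℕ)
      ≤ M * M * (ENNReal.ofReal (|x - y| ^ (2 - s)) * J) := by
        have hmeas := measurable_complexMk_prod (hX ψ) (hX φ)
        simpa [hkernel, Complex.finrank_real_complex] using
          lintegral_rpow_sq_add_norm_sq_le_of_map_le volume hmeas hplanar s hD_pos
    _ = sinWeightMass ^ 4 *
          ENNReal.ofReal ((b ^ 3 * |x - y| ^ (-β)) ^ 2 * |x - y| ^ (2 - s)) * J := by
        rw [ENNReal.ofReal_mul (by positivity), ENNReal.ofReal_pow (by positivity)]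
        ring
    _ = _ := by
        rw [hpowers, ENNReal.ofReal_mul (by positivity)]
        ring

theorem lintegral_energyKernel_le_of_le_abs_sub (hβ : β ≤ 1) {s : ℝ} (hs : 0 ≤ s) {δ x y : ℝ}
    (hδ : 0 < δ) (hfar : δ ≤ |x - y|) :
    ∫⁻ p, energyKernel b β s x y p ∂(randomPhases ℕ).prod (randomPhases ℕ) ≤
      ENNReal.ofReal (δ ^ (-(2 - 2 * β))) * ENNReal.ofReal (|x - y| ^ (-(s - 2 + 2 * β))) := by
  have hD_pos : 0 < |x - y| := hδ.trans_le hfar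
  have hkernel (p : (ℕ → ℝ) × (ℕ → ℝ)) : energyKernel b β s x y p ≤
      ENNReal.ofReal (δ ^ (-(2 - 2 * β)) * |x - y| ^ (-(s - 2 + 2 * β))) := by
    refine ENNReal.ofReal_le_ofReal ?_
    calc ((x - y) ^ 2 + Wdist b β p.1 p.2 x y ^ 2) ^ (-(s / 2))
        ≤ (|x - y| ^ 2) ^ (-(s / 2)) := by
          refine rpow_le_rpow_of_nonpos (by positivity) ?_ (by linarith)
          rw [sq_abs]
          exact le_add_of_nonneg_right (sq_nonneg _)
      _ = |x - y| ^ (-(2 - 2 * β)) * |x - y| ^ (-(s - 2 + 2 * β)) := by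
          rw [← rpow_natCast, ← rpow_mul hD_pos.le, ← rpow_add hD_pos]
          push_cast
          ring_nf
      _ ≤ δ ^ (-(2 - 2 * β)) * |x - y| ^ (-(s - 2 + 2 * β)) := by
          gcongr ?_ * _
          exact rpow_le_rpow_of_nonpos hδ hfar (by linarith)
  rw [← ENNReal.ofReal_mul (by positivity)]
  exact (lintegral_mono hkernel).trans_eq (by simp)

theorem exists_lintegral_energyKernel_le (hb : 1 < b) (hβ : β ∈ Ioc 0 1) {s : ℝ} (hs : 2 < s) :
    ∃ C ≠ ∞, ∀ x y, x ≠ y →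
      ∫⁻ p, energyKernel b β s x y p ∂(randomPhases ℕ).prod (randomPhases ℕ) ≤
        C * ENNReal.ofReal (|x - y| ^ (-(s - 2 + 2 * β))) := by
  set Cnear := sinWeightMass ^ 4 * ENNReal.ofReal (b ^ 6) *
    ∫⁻ z : ℂ, ENNReal.ofReal ((1 + ‖z‖ ^ 2) ^ (-(s / 2)))
  set Cfar := ENNReal.ofReal ((2 * b ^ 2)⁻¹ ^ (-(2 - 2 * β)))
  have : 0 < b := zero_lt_one.trans hb
  have hCnear : Cnear ≠ ∞ := by
    have hbracket := lintegral_rpow_one_add_norm_sq_ne_top (volume : Measure ℂ) (s := s)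
      (by simpa [Complex.finrank_real_complex] using hs)
    have hmass := sinWeightMass_ne_top
    finiteness
  refine ⟨Cnear + Cfar, by finiteness, fun x y hxy ↦ ?_⟩
  rw [add_mul]
  rcases le_total (b ^ 2 * |x - y|) (1 / 2) with hnear | hfar
  · exact (lintegral_energyKernel_le_of_abs_sub_le hb hβ.1 s hxy hnear).trans le_self_add
  · have hδ : (2 * b ^ 2)⁻¹ ≤ |x - y| := by
      rw [inv_le_iff_one_le_mul₀ (by positivity)]
      linarith
    exact (lintegral_energyKernel_le_of_le_abs_sub hβ.2 (by linarith) (by positivity) hδ).trans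
      le_add_self

theorem lintegral_lintegral_lintegral_energyKernel_ne_top (hb : 1 < b) (hβ : 0 < β) {s : ℝ}
    (hs : s ∈ Ioo 2 (3 - 2 * β)) :
    ∫⁻ x in Icc (0 : ℝ) 1, ∫⁻ y in Icc (0 : ℝ) 1,
      ∫⁻ p, energyKernel b β s x y p ∂(randomPhases ℕ).prod (randomPhases ℕ) ≠ ∞ := by
  obtain ⟨C, hC, hbound⟩ := exists_lintegral_energyKernel_le hb ⟨hβ, by linarith [hs.1, hs.2]⟩ hs.1
  have hγ : s - 2 + 2 * β < 1 := by linarith [hs.2]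
  have hfin := ENNReal.mul_ne_top hC (lintegral_Icc_lintegral_Icc_abs_sub_rpow_ne_top hγ)
  rw [← lintegral_const_mul' _ _ hC] at hfin
  simp_rw [← lintegral_const_mul' _ _ hC] at hfin
  refine ne_top_of_le_ne_top hfin (lintegral_mono fun x ↦ lintegral_mono_ae ?_)
  filter_upwards [(countable_singleton x).ae_notMem _] with y hy
  exact hbound x y (Ne.symm hy)

end Weierstrass

end

/-- for `s ∈ (2, 3-2β)`, for a.e. `(Θ,Λ)` the `s`-energy
`I_s(μ_{Θ,Λ}) = ∫₀¹∫₀¹ ((x-y)² + |f(x)-f(y)|²)^{-s/2} dx dy` is finite. -/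
theorem stmt_7 (b β s : ℝ) (hb : 1 < b) (hβ : β ∈ Set.Ioo (0 : ℝ) (1 / 2))
    (hs : s ∈ Set.Ioo (2 : ℝ) (3 - 2 * β))
    (μ : Measure (ℕ → ℝ)) (hμ : IsUniformProductMeasure μ) :
    ∀ᵐ p ∂ μ.prod μ,
      (∫⁻ x in Set.Icc (0 : ℝ) 1, ∫⁻ y in Set.Icc (0 : ℝ) 1,
          ENNReal.ofReal
            (((x - y) ^ 2 + (Wdist b β p.1 p.2 x y) ^ 2) ^ (-(s / 2)))) < ⊤ := by
  obtain rfl := hμ.eq_randomPhases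
  exact ae_lintegral_lintegral_lt_top (measurable_energyKernel hb hβ.1 s)
    (lintegral_lintegral_lintegral_energyKernel_ne_top hb hβ.1 hs)
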